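/- Let $n \ge 2$ be an integer, and let $\phi > 0$, $p, q, s$ be real numbers with $s \ge 0$ and $p^2 - q\phi \ge 0$. Set $\omega^2 = \phi^2 + s$. Then the identity $$n\frac{q\phi - p^2}{\phi^2}\omega^6 + n p^2 \omega^4 + \frac{n-1}{4}\phi^2 p^2 s - 2n p^2 \phi^2 \omega^2 + (2p^2\phi^2 - p^2 s - q\phi\,\omega^2)(s + n\omega^2) = n\frac{q\phi - p^2}{\phi^2} s^2 \omega^2 + (n-1)(q\phi - p^2)s\,\omega^2 - (n+2)p^2 s^2 - \frac{3}{4}(n-1)\phi^2 p^2 s$$ holds, and consequently this quantity is $\le 0$. -/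

import Mathlib

/-- The key pointwise algebraic identity and sign estimate in the gradient
estimate: with `ω² = φ² + s`, `s = |∇̃ρ|² ≥ 0`, `p = φ'`, `q = φ''` and
`p² - qφ ≥ 0`, the bracketed quantity rewrites as stated and is `≤ 0`. -/
theorem gradient_estimate_algebraic_identity
    (n : ℕ) (hn : 2 ≤ n) (φ p q s : ℝ) (hφ : 0 < φ) (hs : 0 ≤ s)
    (hpq : 0 ≤ p ^ 2 - q * φ) :
    (n : ℝ) * ((q * φ - p ^ 2) / φ ^ 2) * (φ ^ 2 + s) ^ 3
        + n * p ^ 2 * (φ ^ 2 + s) ^ 2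
        + (n - 1) / 4 * φ ^ 2 * p ^ 2 * s
        - 2 * n * p ^ 2 * φ ^ 2 * (φ ^ 2 + s)
        + (2 * p ^ 2 * φ ^ 2 - p ^ 2 * s - q * φ * (φ ^ 2 + s))
            * (s + n * (φ ^ 2 + s))
      = (n : ℝ) * ((q * φ - p ^ 2) / φ ^ 2) * s ^ 2 * (φ ^ 2 + s)
        + (n - 1) * (q * φ - p ^ 2) * s * (φ ^ 2 + s)
        - (n + 2) * p ^ 2 * s ^ 2
        - 3 / 4 * (n - 1) * φ ^ 2 * p ^ 2 * s ∧
    (n : ℝ) * ((q * φ - p ^ 2) / φ ^ 2) * (φ ^ 2 + s) ^ 3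
        + n * p ^ 2 * (φ ^ 2 + s) ^ 2
        + (n - 1) / 4 * φ ^ 2 * p ^ 2 * s
        - 2 * n * p ^ 2 * φ ^ 2 * (φ ^ 2 + s)
        + (2 * p ^ 2 * φ ^ 2 - p ^ 2 * s - q * φ * (φ ^ 2 + s))
            * (s + n * (φ ^ 2 + s)) ≤ 0 := by
  have hn1 : (0 : ℝ) ≤ (n : ℝ) - 1 := by
    have h : (2 : ℝ) ≤ (n : ℝ) := by exact_mod_cast hn
    linarith
  refine (fun {a b : Prop} (h : a) (k : a → b) => (⟨h, k h⟩ : a ∧ b)) ?_ (fun h => ?_)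
  · field_simp
    ring
  · rw [h]
    have e : (q * φ - p ^ 2) / φ ^ 2 = -((p ^ 2 - q * φ) / φ ^ 2) := by ring
    have h1 : 0 ≤ (n : ℝ) * ((p ^ 2 - q * φ) / φ ^ 2) * s ^ 2 * (φ ^ 2 + s) := by positivity
    have h2 : 0 ≤ ((n : ℝ) - 1) * (p ^ 2 - q * φ) * s * (φ ^ 2 + s) := by positivity
    have h3 : 0 ≤ ((n : ℝ) + 2) * p ^ 2 * s ^ 2 := by positivity
    have h4 : 0 ≤ 3 / 4 * ((n : ℝ) - 1) * φ ^ 2 * p ^ 2 * s := by positivity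
    rw [e]
    linarith
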